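/- Let G be a DAG on [d], let (p_i), (q_i) be C¹ conditional-density families for G, and let σ be an automorphism of G. For each k ∈ [d] let the first model carry a perfect stochastic intervention p̃_k on node k (a strictly positive C¹ density on ℝ depending on z_k only) and the second model a perfect intervention q̃_{σ(k)} on node σ(k), yielding interventional joints p^k and q^k; assume the general interventional discrepancy holds in both models for every k. Let f, f′ : ℝ^d → ℝ^d be C¹ diffeomorphisms with f_*P^k = f′_*Q^k for all k ∈ {0,…,d}. Then φ := f′⁻¹∘f = P_σ ∘ h, where P_σ is the permutation matrix of σ and h ∈ S_scaling; in particular, CauCA with intervention targets known up to graph automorphisms is identifiable up to composition of an automorphism permutation with elementwise C¹ diffeomorphisms. -/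

import Mathlib

/-!
In the coordinates `w = P_σ⁻¹ z` of the second model the map becomes `ψ = P_σ⁻¹ ∘ φ`, the two
intervened nodes coincide, and both models factorize along the order of `Fin d`. Dividing the
change-of-variables formula of the `k`-th interventional regime by the observational one cancels
`|det Dψ|` and all factors but one, leaving `log (q̃ₖ / qₖ) ∘ ψ = log (p̃ₖ / pₖ)`, where both ratios
depend on the first `k` coordinates only. Since `∂ₖ log (q̃ₖ / qₖ)` is nonzero on a dense set,
differentiating in `zⱼ`, `j > k`, shows by induction on `k` that `Dψ` is lower triangular.

For triangular `ψ` the Jacobian determinant splits over the nodes, so the pullback of an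
autoregressive factorization is again one; by uniqueness of such factorizations
`p̃ₖ(zₖ) = |∂ₖψₖ(z)| q̃ₖ(ψₖ(z))`. Hence `t ↦ ψₖ(z₁, …, zₖ₋₁, t)` transports `p̃ₖ` to `q̃ₖ` for every
`z`. There is exactly one increasing and one decreasing such map of the line, and the sign of
`∂ₖψₖ` is constant, so `ψₖ` depends on `zₖ` alone.
-/

open MeasureTheory

noncomputable section

/-- `f` depends only on the coordinates in `S`. -/
def DependsOnlyOn {d : ℕ} {α : Type*} (f : (Fin d → ℝ) → α) (S : Finset (Fin d)) : Prop :=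
  ∀ z w : Fin d → ℝ, (∀ i ∈ S, z i = w i) → f z = f w

/-- `f` is a C¹ diffeomorphism between (real) normed spaces. -/
def IsC1Diffeo {E F : Type*} [NormedAddCommGroup E] [NormedSpace ℝ E]
    [NormedAddCommGroup F] [NormedSpace ℝ F] (f : E → F) : Prop :=
  ContDiff ℝ 1 f ∧ ∃ g : F → E, ContDiff ℝ 1 g ∧
    Function.LeftInverse g f ∧ Function.RightInverse g f

/-- The measure on `ℝ^d` with density `ρ` with respect to Lebesgue measure. -/
def densityMeasure {d : ℕ} (ρ : (Fin d → ℝ) → ℝ) : Measure (Fin d → ℝ) :=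
  volume.withDensity fun z => ENNReal.ofReal (ρ z)

/-- The measure on `ℝ` with density `r` with respect to Lebesgue measure. -/
def densityMeasure₁ (r : ℝ → ℝ) : Measure ℝ :=
  volume.withDensity fun x => ENNReal.ofReal (r x)

/-- Membership in `S_scaling`: the map acts by an elementwise C¹ diffeomorphism of `ℝ`
on each coordinate. -/
def InSScaling {d : ℕ} (h : (Fin d → ℝ) → (Fin d → ℝ)) : Prop :=
  ∃ hs : Fin d → ℝ → ℝ, (∀ i, IsC1Diffeo (hs i)) ∧ ∀ (z : Fin d → ℝ) (i : Fin d), h z i = hs i (z i)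

/-- Membership in `S_reparam`: a coordinate permutation composed with an element of
`S_scaling`. -/
def InSReparam {d : ℕ} (g : (Fin d → ℝ) → (Fin d → ℝ)) : Prop :=
  ∃ (σ : Equiv.Perm (Fin d)) (hs : Fin d → ℝ → ℝ),
    (∀ i, IsC1Diffeo (hs i)) ∧ ∀ (z : Fin d → ℝ) (i : Fin d), g z i = hs (σ i) (z (σ i))

/-- A C¹ conditional-density family for the DAG on `Fin d` with parent map `pa`:
each `p i` is strictly positive, C¹, depends only on the coordinates `{i} ∪ pa i`,
and integrates to `1` in the `i`-th coordinate. -/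
def IsCondFamily {d : ℕ} (pa : Fin d → Finset (Fin d))
    (p : Fin d → (Fin d → ℝ) → ℝ) : Prop :=
  ∀ i, (∀ z, 0 < p i z) ∧ ContDiff ℝ 1 (p i) ∧
    DependsOnlyOn (p i) (insert i (pa i)) ∧
    ∀ z, (∫ t : ℝ, p i (Function.update z i t)) = 1

/-- A strictly positive C¹ probability density on `ℝ`. -/
def IsC1Density (r : ℝ → ℝ) : Prop :=
  (∀ x, 0 < r x) ∧ ContDiff ℝ 1 r ∧ (∫ x : ℝ, r x) = 1

/-- The joint density `z ↦ ∏ i, p i z` of a conditional-density family. -/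
def jointDensity {d : ℕ} (p : Fin d → (Fin d → ℝ) → ℝ) : (Fin d → ℝ) → ℝ :=
  fun z => ∏ i, p i z

/-- `j` is an ancestor of `i` in the DAG with parent map `pa` (transitive closure of the
parent relation). -/
def IsAnc {d : ℕ} (pa : Fin d → Finset (Fin d)) (j i : Fin d) : Prop :=
  Relation.TransGen (fun a b => a ∈ pa b) j i

section DependsOnlyOn

variable {d : ℕ} {α F : Type*} {S T : Finset (Fin d)}

lemma DependsOnlyOn.mono {f : (Fin d → ℝ) → α} (hf : DependsOnlyOn f S) (hST : S ⊆ T) :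
    DependsOnlyOn f T :=
  fun z w hzw => hf z w fun i hi => hzw i (hST hi)

lemma DependsOnlyOn.apply_update {f : (Fin d → ℝ) → α} (hf : DependsOnlyOn f S) {k : Fin d}
    (hk : k ∉ S) (z : Fin d → ℝ) (t : ℝ) : f (Function.update z k t) = f z :=
  hf _ _ fun _ hi => Function.update_of_ne (ne_of_mem_of_not_mem hi hk) t z

variable [NormedAddCommGroup F] [NormedSpace ℝ F] {f : (Fin d → ℝ) → F}

lemma DependsOnlyOn.fderiv_apply_eq_zero (hf : DependsOnlyOn f S) {v : Fin d → ℝ}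
    (hv : ∀ i ∈ S, v i = 0) (z : Fin d → ℝ) : fderiv ℝ f z v = 0 := by
  by_cases hfz : DifferentiableAt ℝ f z
  · have hline : (fun t : ℝ => f (z + t • v)) = fun _ => f z :=
      funext fun t => hf _ _ fun _ hi => by simp [hv _ hi]
    rw [← hfz.lineDeriv_eq_fderiv, lineDeriv, hline, deriv_const]
  · simp [fderiv_zero_of_not_differentiableAt hfz]

lemma DependsOnlyOn.fderiv_apply_eq_smul (hf : DependsOnlyOn f S) {v : Fin d → ℝ} {k : Fin d}
    (hv : ∀ i ∈ S, i ≠ k → v i = 0) (z : Fin d → ℝ) :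
    fderiv ℝ f z v = v k • fderiv ℝ f z (Pi.single k 1) := by
  rw [← map_smul, ← sub_eq_zero, ← map_sub]
  refine hf.fderiv_apply_eq_zero (fun i hi => ?_) z
  rcases eq_or_ne i k with rfl | hik
  · simp
  · simp [hik, hv i hi hik]

lemma dependsOnlyOn_of_fderiv_single_eq_zero (hf : Differentiable ℝ f)
    (hS : ∀ j ∉ S, ∀ z, fderiv ℝ f z (Pi.single j 1) = 0) : DependsOnlyOn f S := by
  intro z w hzw
  have hfderiv (x : Fin d → ℝ) : fderiv ℝ f x (w - z) = 0 := by
    rw [pi_eq_sum_univ' (w - z), map_sum]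
    refine Finset.sum_eq_zero fun j _ => ?_
    rw [map_smul]
    by_cases hj : j ∈ S
    · simp [hzw j hj]
    · rw [hS j hj x, smul_zero]
  have hline (t : ℝ) : HasDerivAt (fun t : ℝ => f (z + t • (w - z))) 0 t := by
    simpa [hfderiv, Function.comp_def] using (hf (z + t • (w - z))).hasFDerivAt.comp_hasDerivAt t
      (((hasDerivAt_id t).smul_const (w - z)).const_add z)
  simpa using is_const_of_deriv_eq_zero (fun t => (hline t).differentiableAt)
    (fun t => (hline t).deriv) 0 1

end DependsOnlyOn

section Jacobian

variable {d : ℕ}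

/-- The Jacobian matrix of `ψ` at `z`, whose entry `(i, j)` is `∂ψᵢ/∂zⱼ`. -/
def jacobian (ψ : (Fin d → ℝ) → (Fin d → ℝ)) (z : Fin d → ℝ) : Matrix (Fin d) (Fin d) ℝ :=
  LinearMap.toMatrix' (fderiv ℝ ψ z : (Fin d → ℝ) →ₗ[ℝ] (Fin d → ℝ))

variable {ψ : (Fin d → ℝ) → (Fin d → ℝ)}

lemma jacobian_apply (ψ : (Fin d → ℝ) → (Fin d → ℝ)) (z : Fin d → ℝ) (i j : Fin d) :
    jacobian ψ z i j = fderiv ℝ ψ z (Pi.single j 1) i :=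
  rfl

lemma det_jacobian (ψ : (Fin d → ℝ) → (Fin d → ℝ)) (z : Fin d → ℝ) :
    (jacobian ψ z).det = (fderiv ℝ ψ z).det :=
  LinearMap.det_toMatrix' _

lemma continuous_jacobian (hψ : ContDiff ℝ 1 ψ) : Continuous (jacobian ψ) :=
  continuous_matrix fun i j => by
    simp only [jacobian_apply]
    exact (continuous_apply i).comp
      ((hψ.continuous_fderiv one_ne_zero).clm_apply continuous_const)

end Jacobian

section IsC1Diffeo

lemma IsC1Diffeo.comp {E F G : Type*} [NormedAddCommGroup E] [NormedSpace ℝ E]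
    [NormedAddCommGroup F] [NormedSpace ℝ F] [NormedAddCommGroup G] [NormedSpace ℝ G]
    {g : F → G} {f : E → F} (hg : IsC1Diffeo g) (hf : IsC1Diffeo f) : IsC1Diffeo (g ∘ f) := by
  obtain ⟨hgc, g', hgc', hgl, hgr⟩ := hg
  obtain ⟨hfc, f', hfc', hfl, hfr⟩ := hf
  exact ⟨hgc.comp hfc, f' ∘ g', hfc'.comp hgc', hgl.comp hfl, hgr.comp hfr⟩

lemma isC1Diffeo_continuousLinearEquiv {E F : Type*} [NormedAddCommGroup E] [NormedSpace ℝ E]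
    [NormedAddCommGroup F] [NormedSpace ℝ F] (e : E ≃L[ℝ] F) : IsC1Diffeo e :=
  ⟨e.contDiff, e.symm, e.symm.contDiff, e.left_inv, e.right_inv⟩

lemma IsC1Diffeo.differentiable {E F : Type*} [NormedAddCommGroup E] [NormedSpace ℝ E]
    [NormedAddCommGroup F] [NormedSpace ℝ F] {f : E → F} (hf : IsC1Diffeo f) :
    Differentiable ℝ f :=
  hf.1.differentiable one_ne_zero

lemma IsC1Diffeo.isHomeomorph {E F : Type*} [NormedAddCommGroup E] [NormedSpace ℝ E]
    [NormedAddCommGroup F] [NormedSpace ℝ F] {f : E → F} (hf : IsC1Diffeo f) :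
    IsHomeomorph f := by
  obtain ⟨hfc, g, hgc, hl, hr⟩ := hf
  exact isHomeomorph_iff_exists_inverse.2 ⟨hfc.continuous, g, hl, hr, hgc.continuous⟩

lemma IsC1Diffeo.det_fderiv_ne_zero {E : Type*} [NormedAddCommGroup E] [NormedSpace ℝ E]
    {f : E → E} (hf : IsC1Diffeo f) (x : E) : (fderiv ℝ f x).det ≠ 0 := by
  have ⟨_, g, hgc, hl, _⟩ := hf
  have hchain : (fderiv ℝ g (f x)).comp (fderiv ℝ f x) = .id ℝ E := by
    rw [← fderiv_comp x (hgc.differentiable one_ne_zero _) (hf.differentiable x),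
      hl.comp_eq_id, fderiv_id]
  have hdet : (fderiv ℝ g (f x)).det * (fderiv ℝ f x).det = 1 := by
    rw [ContinuousLinearMap.det, ContinuousLinearMap.det, ← LinearMap.det_comp,
      ← ContinuousLinearMap.toLinearMap_comp, hchain, ContinuousLinearMap.coe_id,
      LinearMap.det_id]
  exact right_ne_zero_of_mul_eq_one hdet

variable {d : ℕ} {φ : (Fin d → ℝ) → (Fin d → ℝ)}

lemma IsC1Diffeo.density_eq_of_map_eq (hφ : IsC1Diffeo φ) {a b : (Fin d → ℝ) → ℝ}
    (ha : Continuous a) (hb : Continuous b) (ha0 : ∀ z, 0 ≤ a z) (hb0 : ∀ z, 0 ≤ b z)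
    (h : Measure.map φ (densityMeasure a) = densityMeasure b) (z : Fin d → ℝ) :
    a z = |(jacobian φ z).det| * b (φ z) := by
  have hemb : MeasurableEmbedding φ := hφ.isHomeomorph.isClosedEmbedding.measurableEmbedding
  have hpull : Continuous fun z => |(jacobian φ z).det| * b (φ z) :=
    (continuous_jacobian hφ.1).matrix_det.abs.mul (hb.comp hφ.1.continuous)
  have hmeas : densityMeasure a = densityMeasure fun z => |(jacobian φ z).det| * b (φ z) := by
    ext A hA
    calc densityMeasure a A
        = densityMeasure b (φ '' A) := by
          rw [← h, hemb.map_apply, Set.preimage_image_eq A hemb.injective]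
      _ = ∫⁻ y in φ '' A, ENNReal.ofReal (b y) :=
          withDensity_apply _ (hemb.measurableSet_image' hA)
      _ = ∫⁻ x in A, ENNReal.ofReal |(fderiv ℝ φ x).det| * ENNReal.ofReal (b (φ x)) :=
          lintegral_image_eq_lintegral_abs_det_fderiv_mul volume hA
            (fun x _ => (hφ.differentiable x).hasFDerivAt.hasFDerivWithinAt)
            hemb.injective.injOn _
      _ = densityMeasure (fun z => |(jacobian φ z).det| * b (φ z)) A := by
          simp only [densityMeasure, withDensity_apply _ hA, det_jacobian,
            ENNReal.ofReal_mul (abs_nonneg _)]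
  have hofReal := (withDensity_eq_iff_of_sigmaFinite ha.measurable.ennreal_ofReal.aemeasurable
    hpull.measurable.ennreal_ofReal.aemeasurable).1 hmeas
  refine congrFun ((ha.ae_eq_iff_eq volume hpull).1 ?_) z
  filter_upwards [hofReal] with x hx
  exact (ENNReal.ofReal_eq_ofReal_iff (ha0 x) (mul_nonneg (abs_nonneg _) (hb0 _))).1 hx

end IsC1Diffeo

section DensityTransport

lemma injective_of_deriv_ne_zero {h : ℝ → ℝ} (hh : ∀ t, deriv h t ≠ 0) :
    Function.Injective h := by
  intro a b hab
  by_contra hne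
  wlog hlt : a < b generalizing a b
  · exact this hab.symm (Ne.symm hne) (lt_of_le_of_ne (not_lt.1 hlt) (Ne.symm hne))
  obtain ⟨c, -, hc⟩ := exists_deriv_eq_zero hlt
    (fun t _ => (differentiableAt_of_deriv_ne_zero (hh t)).continuousAt.continuousWithinAt) hab
  exact hh c hc

lemma strictMono_setIntegral_Iic {q : ℝ → ℝ} (hq : ∀ x, 0 < q x) (hqi : Integrable q) :
    StrictMono fun t => ∫ x in Set.Iic t, q x := by
  intro a b hab
  rw [← sub_pos, intervalIntegral.integral_Iic_sub_Iic hqi.integrableOn hqi.integrableOn]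
  exact intervalIntegral.intervalIntegral_pos_of_pos hqi.intervalIntegrable hq hab

/-- The differentiable surjection `h` of `ℝ` satisfies the change-of-variables identity for a
transport of the density `p` to the density `q`. -/
structure TransportsDensity (p q h : ℝ → ℝ) : Prop where
  differentiable : Differentiable ℝ h
  surjective : Function.Surjective h
  density_eq : ∀ t, p t = |deriv h t| * q (h t)

variable {p q h h₁ h₂ : ℝ → ℝ}

lemma TransportsDensity.setIntegral_Iic_eq (hT : TransportsDensity p q h) (hh : StrictMono h)
    (t : ℝ) : ∫ x in Set.Iic (h t), q x = ∫ x in Set.Iic t, p x := by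
  have himage : h '' Set.Iic t = Set.Iic (h t) :=
    (hh.orderIsoOfSurjective h hT.surjective).image_Iic t
  rw [← himage, integral_image_eq_integral_abs_deriv_smul measurableSet_Iic
    (fun x _ => (hT.differentiable x).hasDerivAt.hasDerivWithinAt) hh.injective.injOn]
  simp only [hT.density_eq, smul_eq_mul]

lemma TransportsDensity.eq_of_strictMono (hT₁ : TransportsDensity p q h₁)
    (hT₂ : TransportsDensity p q h₂) (hq : ∀ x, 0 < q x) (hqi : Integrable q)
    (hh₁ : StrictMono h₁) (hh₂ : StrictMono h₂) : h₁ = h₂ :=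
  funext fun t => (strictMono_setIntegral_Iic hq hqi).injective <|
    (hT₁.setIntegral_Iic_eq hh₁ t).trans (hT₂.setIntegral_Iic_eq hh₂ t).symm

lemma TransportsDensity.neg (hT : TransportsDensity p q h) :
    TransportsDensity p (fun x => q (-x)) (-h) where
  differentiable := hT.differentiable.neg
  surjective := neg_surjective.comp hT.surjective
  density_eq t := by simp [hT.density_eq t, deriv.neg]

lemma TransportsDensity.eq_of_strictAnti (hT₁ : TransportsDensity p q h₁)
    (hT₂ : TransportsDensity p q h₂) (hq : ∀ x, 0 < q x) (hqi : Integrable q)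
    (hh₁ : StrictAnti h₁) (hh₂ : StrictAnti h₂) : h₁ = h₂ :=
  neg_injective <| hT₁.neg.eq_of_strictMono hT₂.neg (fun x => hq (-x)) hqi.comp_neg
    hh₁.neg hh₂.neg

end DensityTransport

section Triangular

variable {d : ℕ} {ψ : (Fin d → ℝ) → (Fin d → ℝ)}

/-- The function `t ↦ ψₖ(z₁, …, zₖ₋₁, t, zₖ₊₁, …, z_d)` of the `k`-th variable. -/
def slice (ψ : (Fin d → ℝ) → (Fin d → ℝ)) (k : Fin d) (z : Fin d → ℝ) (t : ℝ) : ℝ :=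
  ψ (Function.update z k t) k

lemma slice_apply_self (ψ : (Fin d → ℝ) → (Fin d → ℝ)) (k : Fin d) (z : Fin d → ℝ) :
    slice ψ k z (z k) = ψ z k := by
  rw [slice, Function.update_eq_self]

lemma hasDerivAt_slice (hψ : Differentiable ℝ ψ) (k : Fin d) (z : Fin d → ℝ) (t : ℝ) :
    HasDerivAt (slice ψ k z) (jacobian ψ (Function.update z k t) k k) t :=
  hasDerivAt_pi.1 ((hψ _).hasFDerivAt.comp_hasDerivAt t (hasDerivAt_update z k t)) k

lemma deriv_slice (hψ : Differentiable ℝ ψ) (k : Fin d) (z : Fin d → ℝ) (t : ℝ) :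
    deriv (slice ψ k z) t = jacobian ψ (Function.update z k t) k k :=
  (hasDerivAt_slice hψ k z t).deriv

lemma dependsOnlyOn_Iic_of_isLowerTriangular (hψ : Differentiable ℝ ψ)
    (hJ : ∀ z, (jacobian ψ z).IsLowerTriangular) (k : Fin d) :
    DependsOnlyOn (fun z => ψ z k) (Finset.Iic k) := by
  refine dependsOnlyOn_of_fderiv_single_eq_zero (differentiable_pi.1 hψ k) fun j hj z => ?_
  rw [fderiv_apply (hψ z), ContinuousLinearMap.comp_apply, ContinuousLinearMap.proj_apply,
    ← jacobian_apply]
  have hkj : k < j := not_le.1 (Finset.mem_Iic.not.1 hj)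
  exact hJ z hkj

lemma slice_congr (hψ : Differentiable ℝ ψ) (hJ : ∀ z, (jacobian ψ z).IsLowerTriangular)
    {k : Fin d} {z w : Fin d → ℝ} (hzw : ∀ i < k, z i = w i) :
    slice ψ k z = slice ψ k w := by
  funext t
  refine dependsOnlyOn_Iic_of_isLowerTriangular hψ hJ k _ _ fun i hi => ?_
  rcases (Finset.mem_Iic.1 hi).lt_or_eq with hik | rfl
  · simp [hik.ne, hzw i hik]
  · simp

lemma slice_apply_of_eqOn_Iio (hψ : Differentiable ℝ ψ) (hJ : ∀ z, (jacobian ψ z).IsLowerTriangular)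
    {k : Fin d} {z w : Fin d → ℝ} (hzw : ∀ i < k, z i = w i) :
    slice ψ k z (w k) = ψ w k := by
  rw [slice_congr hψ hJ hzw, slice_apply_self]

lemma dependsOnlyOn_Iic_jacobian_diag (hψ : Differentiable ℝ ψ)
    (hJ : ∀ z, (jacobian ψ z).IsLowerTriangular) (k : Fin d) :
    DependsOnlyOn (fun z => jacobian ψ z k k) (Finset.Iic k) := by
  intro z w hzw
  have hslice : slice ψ k z = slice ψ k w :=
    slice_congr hψ hJ fun i hi => hzw i (Finset.mem_Iic.2 hi.le)
  have hderiv := congrArg (fun h => deriv h (z k)) hslice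
  simp only [deriv_slice hψ] at hderiv
  rwa [Function.update_eq_self, hzw k (Finset.mem_Iic.2 le_rfl), Function.update_eq_self] at hderiv

variable (hψ : IsC1Diffeo ψ) (hJ : ∀ z, (jacobian ψ z).IsLowerTriangular)
include hψ hJ

lemma jacobian_diag_ne_zero (k : Fin d) (z : Fin d → ℝ) : jacobian ψ z k k ≠ 0 := by
  have hdet := hψ.det_fderiv_ne_zero z
  rw [← det_jacobian, Matrix.det_of_isLowerTriangular _ (hJ z)] at hdet
  exact Finset.prod_ne_zero_iff.1 hdet k (Finset.mem_univ k)

lemma slice_injective (k : Fin d) (z : Fin d → ℝ) : Function.Injective (slice ψ k z) :=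
  injective_of_deriv_ne_zero fun t => by
    rw [deriv_slice hψ.differentiable]
    exact jacobian_diag_ne_zero hψ hJ k _

lemma eqOn_Iio_of_apply_eqOn_Iio {m : Fin d} {z w : Fin d → ℝ} (hzw : ∀ i < m, ψ z i = ψ w i) :
    ∀ i < m, z i = w i := by
  intro i
  induction i using WellFoundedLT.induction with
  | _ i ih =>
    intro him
    have hlt (j : Fin d) (hj : j < i) : z j = w j := ih j hj (hj.trans him)
    apply slice_injective hψ hJ i z
    rw [slice_apply_self, slice_apply_of_eqOn_Iio hψ.differentiable hJ hlt, hzw i him]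

lemma slice_surjective (k : Fin d) (z : Fin d → ℝ) : Function.Surjective (slice ψ k z) := by
  intro s
  obtain ⟨w, hw⟩ := hψ.isHomeomorph.surjective (Function.update (ψ z) k s)
  have hψzw (i : Fin d) (hi : i < k) : ψ z i = ψ w i := by rw [hw, Function.update_of_ne hi.ne]
  exact ⟨w k, by
    rw [slice_apply_of_eqOn_Iio hψ.differentiable hJ (eqOn_Iio_of_apply_eqOn_Iio hψ hJ hψzw), hw,
      Function.update_self]⟩

lemma jacobian_diag_pos_or_neg (k : Fin d) :
    (∀ z, 0 < jacobian ψ z k k) ∨ ∀ z, jacobian ψ z k k < 0 := by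
  by_contra! ⟨⟨z, hz⟩, ⟨w, hw⟩⟩
  obtain ⟨x, hx⟩ := mem_range_of_exists_le_of_exists_ge
    ((continuous_jacobian hψ.1).matrix_elem k k) ⟨z, hz⟩ ⟨w, hw⟩
  exact jacobian_diag_ne_zero hψ hJ k x hx

/-- Each slice of `ψₖ` is the unique map of its orientation transporting `p` to `q`, and all
slices have the same orientation. -/
lemma dependsOnlyOn_singleton_of_density_eq {k : Fin d} {p q : ℝ → ℝ} (hq : ∀ x, 0 < q x)
    (hqi : Integrable q) (hpq : ∀ z, p (z k) = |jacobian ψ z k k| * q (ψ z k)) :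
    DependsOnlyOn (fun z => ψ z k) {k} := by
  have htransport (z : Fin d → ℝ) : TransportsDensity p q (slice ψ k z) :=
    { differentiable := fun t => (hasDerivAt_slice hψ.differentiable k z t).differentiableAt
      surjective := slice_surjective hψ hJ k z
      density_eq := fun t => by
        simpa [deriv_slice hψ.differentiable, slice] using hpq (Function.update z k t) }
  have hslice (z w : Fin d → ℝ) : slice ψ k z = slice ψ k w := by
    rcases jacobian_diag_pos_or_neg hψ hJ k with hpos | hneg
    · have hmono (x : Fin d → ℝ) : StrictMono (slice ψ k x) :=
        strictMono_of_deriv_pos fun t => by simpa only [deriv_slice hψ.differentiable] using hpos _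
      exact (htransport z).eq_of_strictMono (htransport w) hq hqi (hmono z) (hmono w)
    · have hanti (x : Fin d → ℝ) : StrictAnti (slice ψ k x) :=
        strictAnti_of_deriv_neg fun t => by simpa only [deriv_slice hψ.differentiable] using hneg _
      exact (htransport z).eq_of_strictAnti (htransport w) hq hqi (hanti z) (hanti w)
  intro z w hzw
  simp only [← slice_apply_self ψ k, hslice z w, hzw k (Finset.mem_singleton_self k)]

end Triangular

section Scaling

lemma inSScaling_of_dependsOnlyOn_singleton {d : ℕ} {ψ : (Fin d → ℝ) → (Fin d → ℝ)}
    (hψ : IsC1Diffeo ψ) (hdep : ∀ k, DependsOnlyOn (fun z => ψ z k) {k}) : InSScaling ψ := by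
  have hslice (k : Fin d) (z : Fin d → ℝ) : ψ z k = slice ψ k 0 (z k) :=
    hdep k _ _ fun i hi => by simp [Finset.mem_singleton.1 hi]
  refine ⟨fun k => slice ψ k 0, fun k => ?_, fun z k => hslice k z⟩
  have hinj : Function.Injective (slice ψ k 0) := by
    intro s t hst
    refine Function.update_injective (0 : Fin d → ℝ) k <|
      hψ.isHomeomorph.injective (funext fun i => ?_)
    rcases eq_or_ne i k with rfl | hik
    · exact hst
    · exact hdep i _ _ fun l hl => by simp [Finset.mem_singleton.1 hl, hik]
  obtain ⟨hψc, ψinv, hinvc, -, hright⟩ := hψ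
  have hline : ContDiff ℝ 1 (Function.update (0 : Fin d → ℝ) k) :=
    contDiff_update (𝕜 := ℝ) (F' := fun _ => ℝ) 1 0 k
  have hsliceinv : Function.LeftInverse (slice ψ k 0)
      (fun s => ψinv (Function.update (0 : Fin d → ℝ) k s) k) := fun s => by
    rw [← hslice, hright, Function.update_self]
  exact ⟨contDiff_pi.1 (hψc.comp hline) k, _, contDiff_pi.1 (hinvc.comp hline) k,
    hsliceinv.rightInverse_of_injective hinj, hsliceinv⟩

end Scaling

section Autoregressive

variable {d : ℕ}

/-- Conditional densities `pᵢ(zᵢ ∣ z₁, …, zᵢ₋₁)` of the complete DAG in the order of `Fin d`, with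
no regularity beyond positivity and normalization. -/
structure IsAutoregressive (p : Fin d → (Fin d → ℝ) → ℝ) : Prop where
  pos : ∀ i z, 0 < p i z
  dependsOnlyOn : ∀ i, DependsOnlyOn (p i) (Finset.Iic i)
  integral_eq_one : ∀ i z, ∫ t, p i (Function.update z i t) = 1

variable {p q : Fin d → (Fin d → ℝ) → ℝ}

lemma IsCondFamily.isAutoregressive (hp : IsCondFamily Finset.Iio p) : IsAutoregressive p where
  pos i := (hp i).1
  dependsOnlyOn i := by simpa only [Finset.Iio_insert] using (hp i).2.2.1
  integral_eq_one i := (hp i).2.2.2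

lemma IsAutoregressive.integral_prod_Iic (hp : IsAutoregressive p) (k : Fin d) (z : Fin d → ℝ) :
    ∫ t, ∏ i ∈ Finset.Iic k, p i (Function.update z k t) = ∏ i ∈ Finset.Iio k, p i z := by
  have hsplit (t : ℝ) : ∏ i ∈ Finset.Iic k, p i (Function.update z k t) =
      p k (Function.update z k t) * ∏ i ∈ Finset.Iio k, p i z := by
    rw [← Finset.Iio_insert, Finset.prod_insert Finset.notMem_Iio_self]
    congr 1
    refine Finset.prod_congr rfl fun i hi => (hp.dependsOnlyOn i).apply_update ?_ z t
    exact fun hki => (Finset.mem_Iio.1 hi).not_ge (Finset.mem_Iic.1 hki)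
  simp only [hsplit, integral_mul_const, hp.integral_eq_one, one_mul]

lemma IsAutoregressive.eq_of_prod_eq (hp : IsAutoregressive p) (hq : IsAutoregressive q)
    (h : ∀ z, ∏ i, p i z = ∏ i, q i z) (k : Fin d) : p k = q k := by
  induction k using WellFoundedGT.induction with
  | _ k ih =>
    have hIic (z : Fin d → ℝ) : ∏ i ∈ Finset.Iic k, p i z = ∏ i ∈ Finset.Iic k, q i z := by
      have hcompl : ∏ i ∈ (Finset.Iic k)ᶜ, p i z = ∏ i ∈ (Finset.Iic k)ᶜ, q i z :=
        Finset.prod_congr rfl fun i hi => congrFun (ih i (by simpa using hi)) z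
      refine mul_right_cancel₀ (Finset.prod_pos fun i _ => hq.pos i z).ne'
        (b := ∏ i ∈ (Finset.Iic k)ᶜ, q i z) ?_
      rw [Finset.prod_mul_prod_compl, ← hcompl, Finset.prod_mul_prod_compl, h]
    funext z
    have hIio : ∏ i ∈ Finset.Iio k, p i z = ∏ i ∈ Finset.Iio k, q i z := by
      rw [← hp.integral_prod_Iic, ← hq.integral_prod_Iic]
      simp only [hIic]
    have hk := hIic z
    rw [← Finset.Iio_insert, Finset.prod_insert Finset.notMem_Iio_self,
      Finset.prod_insert Finset.notMem_Iio_self, hIio] at hk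
    exact mul_right_cancel₀ (Finset.prod_pos fun i _ => hq.pos i z).ne' hk

variable {ψ : (Fin d → ℝ) → (Fin d → ℝ)}

lemma IsAutoregressive.pullback (hq : IsAutoregressive q) (hψ : IsC1Diffeo ψ)
    (hJ : ∀ z, (jacobian ψ z).IsLowerTriangular) :
    IsAutoregressive fun i z => |jacobian ψ z i i| * q i (ψ z) where
  pos i z := mul_pos (abs_pos.2 (jacobian_diag_ne_zero hψ hJ i z)) (hq.pos i _)
  dependsOnlyOn i z w hzw := by
    have hψi (j : Fin d) (hj : j ∈ Finset.Iic i) : ψ z j = ψ w j :=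
      dependsOnlyOn_Iic_of_isLowerTriangular hψ.differentiable hJ j z w
        fun l hl => hzw l (Finset.Iic_subset_Iic.2 (Finset.mem_Iic.1 hj) hl)
    have hdiag : jacobian ψ z i i = jacobian ψ w i i :=
      dependsOnlyOn_Iic_jacobian_diag hψ.differentiable hJ i z w hzw
    simp only [hdiag, hq.dependsOnlyOn i _ _ hψi]
  integral_eq_one i z := by
    have hupdate (t : ℝ) : q i (ψ (Function.update z i t)) =
        q i (Function.update (ψ z) i (slice ψ i z t)) := by
      refine hq.dependsOnlyOn i _ _ fun j hj => ?_
      rcases (Finset.mem_Iic.1 hj).lt_or_eq with hji | rfl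
      · rw [Function.update_of_ne hji.ne]
        exact (dependsOnlyOn_Iic_of_isLowerTriangular hψ.differentiable hJ j).apply_update
          (fun hij => hji.not_ge (Finset.mem_Iic.1 hij)) z t
      · rw [Function.update_self, slice]
    calc ∫ t, |jacobian ψ (Function.update z i t) i i| * q i (ψ (Function.update z i t))
        = ∫ t in Set.univ, |jacobian ψ (Function.update z i t) i i| •
            q i (Function.update (ψ z) i (slice ψ i z t)) := by
          simp only [hupdate, smul_eq_mul, setIntegral_univ]
      _ = ∫ s in slice ψ i z '' Set.univ, q i (Function.update (ψ z) i s) :=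
          (integral_image_eq_integral_abs_deriv_smul MeasurableSet.univ
            (fun t _ => (hasDerivAt_slice hψ.differentiable i z t).hasDerivWithinAt)
            (slice_injective hψ hJ i z).injOn
            fun s => q i (Function.update (ψ z) i s)).symm
      _ = 1 := by
          rw [Set.image_univ, (slice_surjective hψ hJ i z).range_eq, setIntegral_univ,
            hq.integral_eq_one]

end Autoregressive

section Triangularity

variable {d : ℕ} {ψ : (Fin d → ℝ) → (Fin d → ℝ)}

/-- Differentiating `L k ∘ ψ = R k` in a direction `zⱼ` with `j > k` kills the right-hand side;
once rows `i < k` of the Jacobian vanish beyond the diagonal, only `∂ₖ(L k) · ∂ⱼψₖ` remains on the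
left. -/
lemma isLowerTriangular_jacobian_of_comp_eq (hψ : IsC1Diffeo ψ) {L R : Fin d → (Fin d → ℝ) → ℝ}
    (hL : ∀ k, Differentiable ℝ (L k)) (hLdep : ∀ k, DependsOnlyOn (L k) (Finset.Iic k))
    (hRdep : ∀ k, DependsOnlyOn (R k) (Finset.Iic k))
    (hdense : ∀ k, Dense {z | fderiv ℝ (L k) z (Pi.single k 1) ≠ 0})
    (hcomp : ∀ k, L k ∘ ψ = R k) (z : Fin d → ℝ) : (jacobian ψ z).IsLowerTriangular := by
  suffices hrow : ∀ k j, k < j → (fun z => jacobian ψ z k j) = 0 from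
    fun k j hkj => congrFun (hrow k j hkj) z
  intro k
  induction k using WellFoundedLT.induction with
  | _ k ih =>
    intro j hkj
    refine Continuous.ext_on ((hdense k).preimage hψ.isHomeomorph.isOpenMap)
      ((continuous_jacobian hψ.1).matrix_elem k j) continuous_const fun x hx => ?_
    have hzero : fderiv ℝ (L k) (ψ x) (fderiv ℝ ψ x (Pi.single j 1)) = 0 := by
      rw [← ContinuousLinearMap.comp_apply,
        ← fderiv_comp x (hL k _) (hψ.differentiable x), hcomp k]
      refine (hRdep k).fderiv_apply_eq_zero (fun i hi => ?_) x
      exact Pi.single_eq_of_ne ((Finset.mem_Iic.1 hi).trans_lt hkj).ne 1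
    rw [(hLdep k).fderiv_apply_eq_smul (k := k) fun i hi hik => ?_] at hzero
    · exact (smul_eq_zero.1 hzero).resolve_right hx
    · have hik : i < k := lt_of_le_of_ne (Finset.mem_Iic.1 hi) hik
      exact congrFun (ih i hik j (hik.trans hkj)) x

end Triangularity

section Interventions

variable {d : ℕ} {pa : Fin d → Finset (Fin d)} {p q : Fin d → (Fin d → ℝ) → ℝ} {r s : ℝ → ℝ}

/-- The perfect intervention on node `k` that replaces the `k`-th conditional density by the
density `r` of `zₖ`. -/
def intervene (p : Fin d → (Fin d → ℝ) → ℝ) (k : Fin d) (r : ℝ → ℝ) : Fin d → (Fin d → ℝ) → ℝ :=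
  Function.update p k fun z => r (z k)

lemma intervene_self (p : Fin d → (Fin d → ℝ) → ℝ) (k : Fin d) (r : ℝ → ℝ) :
    intervene p k r k = fun z => r (z k) :=
  Function.update_self ..

lemma intervene_of_ne {i k : Fin d} (hik : i ≠ k) (p : Fin d → (Fin d → ℝ) → ℝ) (r : ℝ → ℝ) :
    intervene p k r i = p i :=
  Function.update_of_ne hik ..

lemma jointDensity_intervene (p : Fin d → (Fin d → ℝ) → ℝ) (k : Fin d) (r : ℝ → ℝ) :
    jointDensity (intervene p k r) =
      fun z => r (z k) * ∏ i ∈ ({k} : Finset (Fin d))ᶜ, p i z := by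
  funext z
  rw [jointDensity, Fintype.prod_eq_mul_prod_compl k, intervene_self]
  congr 1
  exact Finset.prod_congr rfl fun i hi => by rw [intervene_of_ne (by simpa using hi)]

lemma IsCondFamily.jointDensity_pos (hp : IsCondFamily pa p) (z : Fin d → ℝ) :
    0 < jointDensity p z :=
  Finset.prod_pos fun i _ => (hp i).1 z

lemma IsCondFamily.continuous_jointDensity (hp : IsCondFamily pa p) :
    Continuous (jointDensity p) :=
  continuous_finsetProd _ fun i _ => (hp i).2.1.continuous

lemma IsCondFamily.intervene (hp : IsCondFamily pa p) (hr : IsC1Density r) (k : Fin d) :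
    IsCondFamily pa (intervene p k r) := by
  intro i
  rcases eq_or_ne i k with rfl | hik
  · rw [intervene_self]
    refine ⟨fun z => hr.1 _, hr.2.1.comp (contDiff_apply ℝ ℝ i), fun z w hzw => ?_, fun z => ?_⟩
    · exact congrArg r (hzw i (Finset.mem_insert_self i _))
    · simpa only [Function.update_self] using hr.2.2
  · rw [intervene_of_ne hik]
    exact hp i

/-- The log-density ratio `log (r(zₖ) / pₖ(z))` between the model intervened on at node `k` and the
observational model: the factors of all other nodes cancel. -/
def interventionLogRatio (p : Fin d → (Fin d → ℝ) → ℝ) (k : Fin d) (r : ℝ → ℝ)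
    (z : Fin d → ℝ) : ℝ :=
  Real.log (r (z k)) - Real.log (p k z)

lemma interventionLogRatio_eq_log_jointDensity_sub (hp : IsCondFamily pa p) (hr : IsC1Density r)
    (k : Fin d) (z : Fin d → ℝ) :
    interventionLogRatio p k r z =
      Real.log (jointDensity (intervene p k r) z) - Real.log (jointDensity p z) := by
  have hrest : ∏ i ∈ ({k} : Finset (Fin d))ᶜ, p i z ≠ 0 :=
    (Finset.prod_pos fun i _ => (hp i).1 z).ne'
  rw [jointDensity_intervene, jointDensity, Fintype.prod_eq_mul_prod_compl k,
    Real.log_mul (hr.1 _).ne' hrest, Real.log_mul ((hp k).1 z).ne' hrest, interventionLogRatio,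
    add_sub_add_right_eq_sub]

lemma interventionLogRatio_comp {pa' : Fin d → Finset (Fin d)} {ψ : (Fin d → ℝ) → (Fin d → ℝ)}
    (hp : IsCondFamily pa p) (hq : IsCondFamily pa' q) (hr : IsC1Density r) (hs : IsC1Density s)
    (k : Fin d) (hψ : IsC1Diffeo ψ)
    (hmap : Measure.map ψ (densityMeasure (jointDensity p)) = densityMeasure (jointDensity q))
    (hmapk : Measure.map ψ (densityMeasure (jointDensity (intervene p k r))) =
      densityMeasure (jointDensity (intervene q k s))) :
    interventionLogRatio q k s ∘ ψ = interventionLogRatio p k r := by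
  funext z
  have hpk := hp.intervene hr k
  have hqk := hq.intervene hs k
  have hdet : |(jacobian ψ z).det| ≠ 0 := by
    rw [det_jacobian]
    exact abs_ne_zero.2 (hψ.det_fderiv_ne_zero z)
  have hobs := hψ.density_eq_of_map_eq hp.continuous_jointDensity hq.continuous_jointDensity
    (fun z => (hp.jointDensity_pos z).le) (fun z => (hq.jointDensity_pos z).le) hmap z
  have hint := hψ.density_eq_of_map_eq hpk.continuous_jointDensity hqk.continuous_jointDensity
    (fun z => (hpk.jointDensity_pos z).le) (fun z => (hqk.jointDensity_pos z).le) hmapk z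
  rw [Function.comp_apply, interventionLogRatio_eq_log_jointDensity_sub hp hr,
    interventionLogRatio_eq_log_jointDensity_sub hq hs, hobs, hint,
    Real.log_mul hdet (hq.jointDensity_pos _).ne', Real.log_mul hdet (hqk.jointDensity_pos _).ne',
    add_sub_add_left_eq_sub]

lemma dependsOnlyOn_interventionLogRatio (hp : IsCondFamily Finset.Iio p) (k : Fin d)
    (r : ℝ → ℝ) : DependsOnlyOn (interventionLogRatio p k r) (Finset.Iic k) := fun z w hzw => by
  rw [interventionLogRatio, hp.isAutoregressive.dependsOnlyOn k z w hzw,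
    hzw k (Finset.mem_Iic.2 le_rfl), interventionLogRatio]

lemma hasFDerivAt_interventionLogRatio (hp : IsCondFamily pa p) (hr : IsC1Density r) (k : Fin d)
    (z : Fin d → ℝ) :
    HasFDerivAt (interventionLogRatio p k r)
      (deriv (fun t => Real.log (r t)) (z k) • ContinuousLinearMap.proj k -
        fderiv ℝ (fun w => Real.log (p k w)) z) z := by
  have hlogr : DifferentiableAt ℝ (fun t => Real.log (r t)) (z k) :=
    (hr.2.1.differentiable one_ne_zero _).log (hr.1 _).ne'
  have hlogp : DifferentiableAt ℝ (fun w => Real.log (p k w)) z :=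
    ((hp k).2.1.differentiable one_ne_zero z).log ((hp k).1 z).ne'
  have hlogrk : HasFDerivAt (fun w : Fin d → ℝ => Real.log (r (w k)))
      (deriv (fun t => Real.log (r t)) (z k) • ContinuousLinearMap.proj k) z :=
    hlogr.hasDerivAt.comp_hasFDerivAt (f := fun w : Fin d → ℝ => w k) z
      (ContinuousLinearMap.proj (R := ℝ) (φ := fun _ : Fin d => ℝ) k).hasFDerivAt
  exact hlogrk.sub hlogp.hasFDerivAt

lemma fderiv_interventionLogRatio_single (hp : IsCondFamily pa p) (hr : IsC1Density r)
    (k : Fin d) (z : Fin d → ℝ) :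
    fderiv ℝ (interventionLogRatio p k r) z (Pi.single k 1) =
      deriv (fun t => Real.log (r t)) (z k) -
        fderiv ℝ (fun w => Real.log (p k w)) z (Pi.single k 1) := by
  simp [(hasFDerivAt_interventionLogRatio hp hr k z).fderiv]

end Interventions

section MatchingTargets

variable {d : ℕ} {p q : Fin d → (Fin d → ℝ) → ℝ} {r s : Fin d → ℝ → ℝ}
  {ψ : (Fin d → ℝ) → (Fin d → ℝ)}

lemma isLowerTriangular_jacobian_of_map_eq (hp : IsCondFamily Finset.Iio p)
    (hq : IsCondFamily Finset.Iio q) (hr : ∀ k, IsC1Density (r k)) (hs : ∀ k, IsC1Density (s k))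
    (hdisc : ∀ k, Dense {z | fderiv ℝ (fun w => Real.log (q k w)) z (Pi.single k 1) ≠
      deriv (fun t => Real.log (s k t)) (z k)})
    (hψ : IsC1Diffeo ψ)
    (hmap : Measure.map ψ (densityMeasure (jointDensity p)) = densityMeasure (jointDensity q))
    (hmapk : ∀ k, Measure.map ψ (densityMeasure (jointDensity (intervene p k (r k)))) =
      densityMeasure (jointDensity (intervene q k (s k))))
    (z : Fin d → ℝ) : (jacobian ψ z).IsLowerTriangular := by
  refine isLowerTriangular_jacobian_of_comp_eq hψ
    (fun k z => (hasFDerivAt_interventionLogRatio hq (hs k) k z).differentiableAt)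
    (fun k => dependsOnlyOn_interventionLogRatio hq k (s k))
    (fun k => dependsOnlyOn_interventionLogRatio hp k (r k)) (fun k => ?_)
    (fun k => interventionLogRatio_comp hp hq (hr k) (hs k) k hψ hmap (hmapk k)) z
  refine (hdisc k).mono fun w hw => ?_
  rw [Set.mem_ofPred_eq, fderiv_interventionLogRatio_single hq (hs k)]
  exact sub_ne_zero.2 (Ne.symm hw)

lemma condDensity_eq_of_map_eq (hp : IsCondFamily Finset.Iio p) (hq : IsCondFamily Finset.Iio q)
    (hψ : IsC1Diffeo ψ) (hJ : ∀ z, (jacobian ψ z).IsLowerTriangular)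
    (hmap : Measure.map ψ (densityMeasure (jointDensity p)) = densityMeasure (jointDensity q))
    (k : Fin d) (z : Fin d → ℝ) : p k z = |jacobian ψ z k k| * q k (ψ z) := by
  refine congrFun (hp.isAutoregressive.eq_of_prod_eq (hq.isAutoregressive.pullback hψ hJ)
    (fun w => ?_) k) z
  rw [Finset.prod_mul_distrib, ← Finset.abs_prod, ← Matrix.det_of_isLowerTriangular _ (hJ w)]
  exact hψ.density_eq_of_map_eq hp.continuous_jointDensity hq.continuous_jointDensity
    (fun z => (hp.jointDensity_pos z).le) (fun z => (hq.jointDensity_pos z).le) hmap w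

theorem inSScaling_of_map_eq (hp : IsCondFamily Finset.Iio p)
    (hq : IsCondFamily Finset.Iio q) (hr : ∀ k, IsC1Density (r k)) (hs : ∀ k, IsC1Density (s k))
    (hdisc : ∀ k, Dense {z | fderiv ℝ (fun w => Real.log (q k w)) z (Pi.single k 1) ≠
      deriv (fun t => Real.log (s k t)) (z k)})
    (hψ : IsC1Diffeo ψ)
    (hmap : Measure.map ψ (densityMeasure (jointDensity p)) = densityMeasure (jointDensity q))
    (hmapk : ∀ k, Measure.map ψ (densityMeasure (jointDensity (intervene p k (r k)))) =
      densityMeasure (jointDensity (intervene q k (s k)))) : InSScaling ψ := by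
  have hJ := isLowerTriangular_jacobian_of_map_eq hp hq hr hs hdisc hψ hmap hmapk
  refine inSScaling_of_dependsOnlyOn_singleton hψ fun k => ?_
  refine dependsOnlyOn_singleton_of_density_eq (p := r k) (q := s k) hψ hJ (hs k).1
    (.of_integral_ne_zero ((hs k).2.2.trans_ne one_ne_zero)) fun z => ?_
  simpa only [intervene_self] using
    condDensity_eq_of_map_eq (hp.intervene (hr k) k) (hq.intervene (hs k) k) hψ hJ (hmapk k) k z

end MatchingTargets

section Relabelling

variable {d : ℕ} {pa pa' : Fin d → Finset (Fin d)} {q : Fin d → (Fin d → ℝ) → ℝ}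

/-- The permutation matrix `P_σ` as a linear equivalence, normalized by `(P_σ w)_{σ i} = wᵢ`. -/
def permCoords (σ : Equiv.Perm (Fin d)) : (Fin d → ℝ) ≃L[ℝ] (Fin d → ℝ) :=
  .piCongrLeft ℝ (fun _ => ℝ) σ

lemma permCoords_apply_apply (σ : Equiv.Perm (Fin d)) (w : Fin d → ℝ) (i : Fin d) :
    permCoords σ w (σ i) = w i :=
  Equiv.piCongrLeft_apply_apply (P := fun _ => ℝ) ..

lemma permCoords_symm_apply (σ : Equiv.Perm (Fin d)) (z : Fin d → ℝ) (i : Fin d) :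
    (permCoords σ).symm z i = z (σ i) :=
  rfl

lemma permCoords_update (σ : Equiv.Perm (Fin d)) (w : Fin d → ℝ) (i : Fin d) (t : ℝ) :
    permCoords σ (Function.update w i t) = Function.update (permCoords σ w) (σ i) t := by
  refine funext (σ.forall_congr_right.1 fun j => ?_)
  simp [permCoords_apply_apply, Function.update_apply]

lemma permCoords_single (σ : Equiv.Perm (Fin d)) (i : Fin d) (t : ℝ) :
    permCoords σ (Pi.single i t) = Pi.single (σ i) t := by
  rw [Pi.single, permCoords_update, map_zero, Pi.single]

lemma measurePreserving_permCoords_symm (σ : Equiv.Perm (Fin d)) :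
    MeasurePreserving (permCoords σ).symm :=
  (volume_measurePreserving_piCongrLeft (fun _ => ℝ) σ).symm

lemma map_densityMeasure_comp {e : (Fin d → ℝ) → (Fin d → ℝ)} (he : MeasurePreserving e)
    (hemb : MeasurableEmbedding e) (ρ : (Fin d → ℝ) → ℝ) :
    Measure.map e (densityMeasure (ρ ∘ e)) = densityMeasure ρ := by
  ext A hA
  rw [Measure.map_apply he.measurable hA, densityMeasure, densityMeasure, withDensity_apply _ hA,
    withDensity_apply _ (he.measurable hA)]
  exact he.setLIntegral_comp_preimage_emb hemb (fun z => ENNReal.ofReal (ρ z)) A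

lemma map_permCoords_symm_densityMeasure (σ : Equiv.Perm (Fin d)) (ρ : (Fin d → ℝ) → ℝ) :
    Measure.map (permCoords σ).symm (densityMeasure ρ) = densityMeasure (ρ ∘ permCoords σ) := by
  have hcancel : (ρ ∘ permCoords σ) ∘ (permCoords σ).symm = ρ :=
    funext fun z => congrArg ρ ((permCoords σ).apply_symm_apply z)
  rw [← map_densityMeasure_comp (measurePreserving_permCoords_symm σ)
    (permCoords σ).symm.toHomeomorph.measurableEmbedding (ρ ∘ permCoords σ), hcancel]

/-- The conditional densities `q` in the coordinates `w = P_σ⁻¹ z`, where node `i` stands for the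
original node `σ i`. -/
def relabel (σ : Equiv.Perm (Fin d)) (q : Fin d → (Fin d → ℝ) → ℝ) : Fin d → (Fin d → ℝ) → ℝ :=
  fun i => q (σ i) ∘ permCoords σ

lemma jointDensity_relabel (σ : Equiv.Perm (Fin d)) (q : Fin d → (Fin d → ℝ) → ℝ) :
    jointDensity (relabel σ q) = jointDensity q ∘ permCoords σ :=
  funext fun w => Equiv.prod_comp σ fun i => q i (permCoords σ w)

lemma relabel_intervene (σ : Equiv.Perm (Fin d)) (q : Fin d → (Fin d → ℝ) → ℝ) (k : Fin d)
    (r : ℝ → ℝ) : relabel σ (intervene q (σ k) r) = intervene (relabel σ q) k r := by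
  funext i w
  rcases eq_or_ne i k with rfl | hik
  · simp [relabel, intervene_self, permCoords_apply_apply]
  · simp [relabel, intervene_of_ne hik, intervene_of_ne (σ.injective.ne hik)]

lemma IsCondFamily.relabel {σ : Equiv.Perm (Fin d)} (hq : IsCondFamily pa' q)
    (hσ : ∀ i j, σ j ∈ pa' (σ i) → j ∈ pa i) : IsCondFamily pa (relabel σ q) := by
  intro i
  obtain ⟨hpos, hcont, hdep, hint⟩ := hq (σ i)
  refine ⟨fun w => hpos _, hcont.comp (permCoords σ).contDiff, fun z w hzw => ?_, fun w => ?_⟩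
  · refine hdep _ _ (σ.forall_congr_right.1 fun j hj => ?_)
    rw [permCoords_apply_apply, permCoords_apply_apply]
    refine hzw j (Finset.mem_insert.2 ((Finset.mem_insert.1 hj).imp ?_ (hσ i j)))
    exact fun h => σ.injective h
  · simpa only [_root_.relabel, Function.comp_apply, permCoords_update] using hint (permCoords σ w)

lemma IsCondFamily.mono (hq : IsCondFamily pa q) (hpa : ∀ i, pa i ⊆ pa' i) :
    IsCondFamily pa' q := fun i =>
  have ⟨hpos, hcont, hdep, hint⟩ := hq i
  ⟨hpos, hcont, hdep.mono (Finset.insert_subset_insert i (hpa i)), hint⟩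

lemma fderiv_log_relabel_single (σ : Equiv.Perm (Fin d)) (q : Fin d → (Fin d → ℝ) → ℝ)
    (k : Fin d) (w : Fin d → ℝ) :
    fderiv ℝ (fun w => Real.log (relabel σ q k w)) w (Pi.single k 1) =
      fderiv ℝ (fun z => Real.log (q (σ k) z)) (permCoords σ w) (Pi.single (σ k) 1) := by
  change fderiv ℝ ((fun z => Real.log (q (σ k) z)) ∘ permCoords σ) w _ = _
  rw [(permCoords σ).comp_right_fderiv, ContinuousLinearMap.comp_apply,
    ContinuousLinearEquiv.coe_coe, permCoords_single]

theorem inSScaling_permCoords_symm_comp_of_map_eq {p : Fin d → (Fin d → ℝ) → ℝ}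
    {r s : Fin d → ℝ → ℝ} {φ : (Fin d → ℝ) → (Fin d → ℝ)} {σ : Equiv.Perm (Fin d)}
    (hpa : ∀ i, ∀ j ∈ pa i, j < i) (hσ : ∀ i j, σ j ∈ pa' (σ i) → j < i)
    (hp : IsCondFamily pa p) (hq : IsCondFamily pa' q)
    (hr : ∀ k, IsC1Density (r k)) (hs : ∀ k, IsC1Density (s k))
    (hdisc : ∀ k, Dense {z | fderiv ℝ (fun w => Real.log (q (σ k) w)) z (Pi.single (σ k) 1) ≠
      deriv (fun t => Real.log (s k t)) (z (σ k))})
    (hφ : IsC1Diffeo φ)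
    (hmap : Measure.map φ (densityMeasure (jointDensity p)) = densityMeasure (jointDensity q))
    (hmapk : ∀ k, Measure.map φ (densityMeasure (jointDensity (intervene p k (r k)))) =
      densityMeasure (jointDensity (intervene q (σ k) (s k)))) :
    InSScaling ((permCoords σ).symm ∘ φ) := by
  have hmap_comp (μ : Measure (Fin d → ℝ)) : Measure.map ((permCoords σ).symm ∘ φ) μ =
      Measure.map (permCoords σ).symm (Measure.map φ μ) :=
    (Measure.map_map (permCoords σ).symm.continuous.measurable hφ.1.continuous.measurable).symm
  refine inSScaling_of_map_eq (q := relabel σ q) (s := s)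
    (hp.mono fun i j hj => Finset.mem_Iio.2 (hpa i j hj))
    (hq.relabel fun i j hj => Finset.mem_Iio.2 (hσ i j hj)) hr hs (fun k => ?_)
    ((isC1Diffeo_continuousLinearEquiv (permCoords σ).symm).comp hφ) ?_ fun k => ?_
  · refine ((hdisc k).preimage (permCoords σ).toHomeomorph.isOpenMap).mono fun w hw => ?_
    rw [Set.mem_ofPred_eq, fderiv_log_relabel_single, ← permCoords_apply_apply σ w k]
    exact hw
  · rw [hmap_comp, hmap, map_permCoords_symm_densityMeasure, jointDensity_relabel]
  · rw [hmap_comp, hmapk, map_permCoords_symm_densityMeasure, ← relabel_intervene,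
      jointDensity_relabel]

end Relabelling

lemma map_comp_eq_of_map_eq_map {α β γ : Type*} [MeasurableSpace α] [MeasurableSpace β]
    [MeasurableSpace γ] {μ : Measure α} {ν : Measure β} {f : α → γ} {f' : β → γ} {g' : γ → β}
    (hf : Measurable f) (hf' : Measurable f') (hg' : Measurable g')
    (hinv : Function.LeftInverse g' f') (h : Measure.map f μ = Measure.map f' ν) :
    Measure.map (g' ∘ f) μ = ν := by
  rw [← Measure.map_map hg' hf, h, Measure.map_map hg' hf', hinv.comp_eq_id, Measure.map_id]

theorem cauca_automorphism_scaling_identifiability_general {d : ℕ}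
    (pa pa' : Fin d → Finset (Fin d))
    (hpa : ∀ i : Fin d, ∀ j ∈ pa i, j < i)
    (σ : Equiv.Perm (Fin d))
    (hσ : ∀ i j : Fin d, σ j ∈ pa' (σ i) → j < i)
    (p q : Fin d → (Fin d → ℝ) → ℝ)
    (hp : IsCondFamily pa p) (hq : IsCondFamily pa' q)
    (pt qt : Fin d → ℝ → ℝ)
    (hpt : ∀ k, IsC1Density (pt k)) (hqt : ∀ k, IsC1Density (qt k))
    (hdisc : ∀ k : Fin d, Dense {z : Fin d → ℝ |
        fderiv ℝ (fun w => Real.log (q (σ k) w)) z (Pi.single (σ k) 1) ≠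
          deriv (fun t => Real.log (qt k t)) (z (σ k))})
    (f f' g' : (Fin d → ℝ) → (Fin d → ℝ))
    (hf : IsC1Diffeo f) (hf' : ContDiff ℝ 1 f') (hg' : ContDiff ℝ 1 g')
    (hinv₁ : Function.LeftInverse g' f') (hinv₂ : Function.RightInverse g' f')
    (hmatch0 : Measure.map f (densityMeasure (jointDensity p)) =
        Measure.map f' (densityMeasure (jointDensity q)))
    (hmatch : ∀ k : Fin d,
        Measure.map f (densityMeasure fun z =>
            pt k (z k) * ∏ i ∈ ({k} : Finset (Fin d))ᶜ, p i z) =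
        Measure.map f' (densityMeasure fun z =>
            qt k (z (σ k)) * ∏ i ∈ ({σ k} : Finset (Fin d))ᶜ, q i z)) :
    ∃ hs : Fin d → ℝ → ℝ, (∀ i, IsC1Diffeo (hs i)) ∧
      ∀ (z : Fin d → ℝ) (i : Fin d), g' (f z) (σ i) = hs i (z i) := by
  have htransport {μ ν : Measure (Fin d → ℝ)} (h : Measure.map f μ = Measure.map f' ν) :
      Measure.map (g' ∘ f) μ = ν :=
    map_comp_eq_of_map_eq_map hf.1.continuous.measurable hf'.continuous.measurable
      hg'.continuous.measurable hinv₁ h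
  have hintervene (k : Fin d) :
      Measure.map (g' ∘ f) (densityMeasure (jointDensity (intervene p k (pt k)))) =
        densityMeasure (jointDensity (intervene q (σ k) (qt k))) := by
    rw [jointDensity_intervene, jointDensity_intervene]
    exact htransport (hmatch k)
  obtain ⟨hs, hsC1, hscaling⟩ : InSScaling ((permCoords σ).symm ∘ g' ∘ f) :=
    inSScaling_permCoords_symm_comp_of_map_eq hpa hσ hp hq hpt hqt hdisc
      (IsC1Diffeo.comp ⟨hg', f', hf', hinv₂, hinv₁⟩ hf) (htransport hmatch0) hintervene
  refine ⟨hs, hsC1, fun z i => ?_⟩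
  rw [← hscaling, Function.comp_apply, permCoords_symm_apply, Function.comp_apply]

/-- **Theorem (known targets up to graph automorphisms, part (ii)).** Two models over the
same DAG, where `σ` is a graph automorphism; for each node `k` the first model carries a
perfect stochastic intervention `pt k` on node `k` and the second model a perfect
intervention `qt k` on node `σ k`. Under the general interventional discrepancy in both
models and matching pushforwards in all regimes, `φ := f′⁻¹ ∘ f = P_σ ∘ h` with
`h ∈ S_scaling`: there are C¹ diffeomorphisms `hs i` of `ℝ` with
`φ(z) (σ i) = hs i (z i)` for all `z` and `i`. -/
theorem cauca_automorphism_scaling_identifiability {d : ℕ}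
    (pa : Fin d → Finset (Fin d))
    (hpa : ∀ i : Fin d, ∀ j ∈ pa i, j < i)
    (σ : Equiv.Perm (Fin d))
    (hσ : ∀ i j : Fin d, j ∈ pa i ↔ σ j ∈ pa (σ i))
    (p q : Fin d → (Fin d → ℝ) → ℝ)
    (hp : IsCondFamily pa p) (hq : IsCondFamily pa q)
    (pt qt : Fin d → ℝ → ℝ)
    (hpt : ∀ k, IsC1Density (pt k)) (hqt : ∀ k, IsC1Density (qt k))
    (hdiscp : ∀ k i : Fin d, ∀ᵐ (z : Fin d → ℝ) ∂volume,
        fderiv ℝ (fun w => Real.log (p i w)) z (Pi.single i 1) ≠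
          deriv (fun t => Real.log (pt k t)) (z k))
    (hdiscq : ∀ k i : Fin d, ∀ᵐ (z : Fin d → ℝ) ∂volume,
        fderiv ℝ (fun w => Real.log (q i w)) z (Pi.single i 1) ≠
          deriv (fun t => Real.log (qt k t)) (z (σ k)))
    (f f' g' : (Fin d → ℝ) → (Fin d → ℝ))
    (hf : IsC1Diffeo f) (hf' : ContDiff ℝ 1 f') (hg' : ContDiff ℝ 1 g')
    (hinv₁ : Function.LeftInverse g' f') (hinv₂ : Function.RightInverse g' f')
    (hmatch0 : Measure.map f (densityMeasure (jointDensity p)) =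
        Measure.map f' (densityMeasure (jointDensity q)))
    (hmatch : ∀ k : Fin d,
        Measure.map f (densityMeasure fun z =>
            pt k (z k) * ∏ i ∈ ({k} : Finset (Fin d))ᶜ, p i z) =
        Measure.map f' (densityMeasure fun z =>
            qt k (z (σ k)) * ∏ i ∈ ({σ k} : Finset (Fin d))ᶜ, q i z)) :
    ∃ hs : Fin d → ℝ → ℝ, (∀ i, IsC1Diffeo (hs i)) ∧
      ∀ (z : Fin d → ℝ) (i : Fin d), g' (f z) (σ i) = hs i (z i) :=
  cauca_automorphism_scaling_identifiability_general pa pa hpa σ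
    (fun i j hj => hpa i j ((hσ i j).2 hj)) p q hp hq pt qt hpt hqt
    (fun k => Measure.dense_of_ae (hdiscq k (σ k))) f f' g' hf hf' hg' hinv₁ hinv₂ hmatch0 hmatch
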